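/- Let d ≥ 2 and κ > 0, and let h : (−1,1) → ℝ be the unique differentiable function with ∫(1−r²)^{(d−1)/2}h² dr < ∞ and ∫(1−r²)^{(d+1)/2}(h')² dr < ∞ satisfying, for every differentiable ℓ in the same class, ∫ (1−r²)^{(d+1)/2} e^{κr²/2} h'ℓ' dr + ∫ (1−r²)^{(d−1)/2} (κr²+d−1) e^{κr²/2} hℓ dr = − ∫ r (1−r²)^{(d−1)/2} e^{κr²/2} ℓ dr. Then h is odd, i.e. h(−r) = −h(r) for all r ∈ (−1,1), and h(r) ≤ 0 for all r ∈ [0,1). -/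

import Mathlib

/-! Both claims are energy estimates for the weak equation; write `a`, `b` for the two (nonnegative)
coefficients, so that the equation reads `∫ a h' ℓ' + ∫ b h ℓ = -∫ r m ℓ` with `a`, `b`, `m` even.

*Oddness.* Test with the even function `w r = h r + h (-r)`. The right-hand side vanishes because
its integrand is odd. Reflecting `r ↦ -r` and averaging turns the left-hand side into
`(∫ a w' ^ 2 + ∫ b w ^ 2) / 2`, hence `∫ b w ^ 2 ≤ 0`, and `w = 0` by continuity.

*Sign.* The positive part of `h` on `[0,1)` is not differentiable, so it is replaced by `φ ∘ h` on
`[0,1)` (and `0` on `(-1,0)`), where `φ = gciCutoff` is a `C¹` function vanishing on `(-∞,0]`,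
positive on `(0,∞)`, with `0 ≤ φ' ≤ 1`. As `h 0 = 0` and `φ 0 = φ' 0 = 0`, this test function is
differentiable at `0`. In the weak equation the left-hand integrands are then nonnegative and the
right-hand side is nonpositive, so `b h φ(h) = 0` on `[0,1)`, which forces `h ≤ 0` there.
-/

open MeasureTheory Set

/-- `IsGCIProfile d κ h` says that `h` is differentiable on `(−1,1)`, belongs to the weighted
space `𝓗_{(d−1)/2,(d+1)/2}`, and satisfies the variational (weak) formulation of the GCI ODE
against every test function `ℓ` in the same space. -/
def IsGCIProfile (d : ℕ) (κ : ℝ) (h : ℝ → ℝ) : Prop :=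
  (∀ r ∈ Ioo (-1 : ℝ) 1, DifferentiableAt ℝ h r) ∧
  IntegrableOn (fun r : ℝ => (1 - r ^ 2) ^ (((d : ℝ) - 1) / 2) * h r ^ 2) (Ioo (-1 : ℝ) 1) ∧
  IntegrableOn (fun r : ℝ => (1 - r ^ 2) ^ (((d : ℝ) + 1) / 2) * deriv h r ^ 2) (Ioo (-1 : ℝ) 1) ∧
  ∀ ℓ : ℝ → ℝ,
    (∀ r ∈ Ioo (-1 : ℝ) 1, DifferentiableAt ℝ ℓ r) →
    IntegrableOn (fun r : ℝ => (1 - r ^ 2) ^ (((d : ℝ) - 1) / 2) * ℓ r ^ 2) (Ioo (-1 : ℝ) 1) →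
    IntegrableOn (fun r : ℝ => (1 - r ^ 2) ^ (((d : ℝ) + 1) / 2) * deriv ℓ r ^ 2)
      (Ioo (-1 : ℝ) 1) →
    (∫ r in Ioo (-1 : ℝ) 1,
        (1 - r ^ 2) ^ (((d : ℝ) + 1) / 2) * Real.exp (κ * r ^ 2 / 2) * deriv h r * deriv ℓ r)
      + (∫ r in Ioo (-1 : ℝ) 1,
          (1 - r ^ 2) ^ (((d : ℝ) - 1) / 2) * (κ * r ^ 2 + ((d : ℝ) - 1)) *
            Real.exp (κ * r ^ 2 / 2) * h r * ℓ r)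
      = - ∫ r in Ioo (-1 : ℝ) 1,
          r * (1 - r ^ 2) ^ (((d : ℝ) - 1) / 2) * Real.exp (κ * r ^ 2 / 2) * ℓ r

lemma gci_integral_comp_neg (F : ℝ → ℝ) :
    ∫ r in Ioo (-1 : ℝ) 1, F (-r) = ∫ r in Ioo (-1 : ℝ) 1, F r := by
  rw [← integral_Ioc_eq_integral_Ioo, ← integral_Ioc_eq_integral_Ioo,
    ← intervalIntegral.integral_of_le (by norm_num),
    ← intervalIntegral.integral_of_le (by norm_num), intervalIntegral.integral_comp_neg]
  simp

lemma gci_integrableOn_comp_neg {F : ℝ → ℝ} (hF : IntegrableOn F (Ioo (-1 : ℝ) 1)) :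
    IntegrableOn (fun r => F (-r)) (Ioo (-1 : ℝ) 1) := by
  have := (Measure.measurePreserving_neg (volume : Measure ℝ)).integrableOn_comp_preimage
    (Homeomorph.neg ℝ).measurableEmbedding (f := F) (s := Ioo (-1 : ℝ) 1)
  have h2 := this.2 hF
  have h3 : (fun x : ℝ => -x) ⁻¹' Ioo (-1 : ℝ) 1 = Ioo (-1 : ℝ) 1 := by
    ext x; simp only [mem_preimage, mem_Ioo]; constructor <;> rintro ⟨h, h'⟩ <;>
      constructor <;> linarith
  have h4 : Neg.neg ⁻¹' Ioo (-1 : ℝ) 1 = Ioo (-1 : ℝ) 1 := h3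
  rw [h4] at h2
  exact h2

/-- Weighted Cauchy–Schwarz: a bounded coefficient `E` times the product of two functions in the
weighted `L²` space is integrable. -/
lemma gci_integrableOn_mul {W E u v : ℝ → ℝ} {C : ℝ}
    (hW : ContinuousOn W (Ioo (-1 : ℝ) 1)) (hE : ContinuousOn E (Ioo (-1 : ℝ) 1))
    (hW0 : ∀ r ∈ Ioo (-1 : ℝ) 1, 0 ≤ W r) (hEC : ∀ r ∈ Ioo (-1 : ℝ) 1, |E r| ≤ C)
    (hu : AEStronglyMeasurable u (volume.restrict (Ioo (-1 : ℝ) 1)))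
    (hv : AEStronglyMeasurable v (volume.restrict (Ioo (-1 : ℝ) 1)))
    (hu2 : IntegrableOn (fun r => W r * u r ^ 2) (Ioo (-1 : ℝ) 1))
    (hv2 : IntegrableOn (fun r => W r * v r ^ 2) (Ioo (-1 : ℝ) 1)) :
    IntegrableOn (fun r => W r * E r * u r * v r) (Ioo (-1 : ℝ) 1) := by
  refine Integrable.mono' ((hu2.add hv2).const_mul C)
    ((((hW.aestronglyMeasurable measurableSet_Ioo).mul
      (hE.aestronglyMeasurable measurableSet_Ioo)).mul hu).mul hv) ?_
  refine (ae_restrict_iff' measurableSet_Ioo).2 (Filter.Eventually.of_forall fun r hr => ?_)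
  have h1 := hW0 r hr
  have h2 := hEC r hr
  have h3 : |u r| * |v r| ≤ u r ^ 2 + v r ^ 2 := by
    rw [← sq_abs (u r), ← sq_abs (v r)]
    nlinarith [sq_nonneg (|u r| - |v r|), sq_nonneg (|u r|), sq_nonneg (|v r|)]
  have hC : 0 ≤ C := (abs_nonneg _).trans h2
  simp only [Real.norm_eq_abs, abs_mul, abs_of_nonneg h1, Pi.add_apply]
  calc W r * |E r| * |u r| * |v r| = (W r * |E r|) * (|u r| * |v r|) := by ring
    _ ≤ (W r * C) * (u r ^ 2 + v r ^ 2) := by gcongr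
    _ = _ := by ring

lemma gci_eq_zero {p : ℝ → ℝ} (hc : ContinuousOn p (Ioo (-1 : ℝ) 1))
    (h0 : ∀ r ∈ Ioo (-1 : ℝ) 1, 0 ≤ p r) (hi : IntegrableOn p (Ioo (-1 : ℝ) 1))
    (hle : ∫ r in Ioo (-1 : ℝ) 1, p r ≤ 0) : ∀ r ∈ Ioo (-1 : ℝ) 1, p r = 0 := by
  have hz := le_antisymm hle (setIntegral_nonneg measurableSet_Ioo h0)
  rw [setIntegral_eq_zero_iff_of_nonneg_ae
    ((ae_restrict_iff' measurableSet_Ioo).2 (Filter.Eventually.of_forall h0)) hi] at hz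
  exact Measure.eqOn_open_of_ae_eq hz isOpen_Ioo hc continuousOn_const

/-- A `C¹` regularisation of the positive part: `φ t = ∫₀ᵗ min 1 (max s 0) ds`. -/
noncomputable def gciCutoff (t : ℝ) : ℝ := ∫ s in (0 : ℝ)..t, min 1 (max s 0)

lemma gciCutoff_hasDerivAt (t : ℝ) : HasDerivAt gciCutoff (min 1 (max t 0)) t := by
  have hc : Continuous fun s : ℝ => min 1 (max s 0) := by fun_prop
  exact hc.integral_hasStrictDerivAt 0 t |>.hasDerivAt

lemma gciCutoff_nonpos {t : ℝ} (ht : t ≤ 0) : gciCutoff t = 0 := by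
  unfold gciCutoff
  rw [intervalIntegral.integral_congr (g := fun _ => (0 : ℝ)), intervalIntegral.integral_zero]
  intro s hs
  rw [uIcc_of_ge ht] at hs
  simp [max_eq_right hs.2]

lemma gciCutoff_pos {t : ℝ} (ht : 0 < t) : 0 < gciCutoff t := by
  have hc : Continuous fun s : ℝ => min 1 (max s 0) := by fun_prop
  refine intervalIntegral.intervalIntegral_pos_of_pos_on (hc.intervalIntegrable _ _) ?_ ht
  intro s hs
  exact lt_min one_pos (lt_max_of_lt_left hs.1)

lemma gciCutoff_nonneg (t : ℝ) : 0 ≤ gciCutoff t := by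
  rcases le_or_gt t 0 with h | h
  · exact (gciCutoff_nonpos h).ge
  · exact (gciCutoff_pos h).le

lemma gciCutoff_sq_le (t : ℝ) : gciCutoff t ^ 2 ≤ t ^ 2 := by
  have := intervalIntegral.norm_integral_le_of_norm_le_const (a := 0) (b := t) (C := 1)
    (f := fun s : ℝ => min 1 (max s 0)) (fun s _ => by
      rw [Real.norm_eq_abs, abs_of_nonneg (le_min zero_le_one (le_max_right _ _))]
      exact min_le_left _ _)
  rw [Real.norm_eq_abs, sub_zero, one_mul] at this
  exact sq_le_sq.2 this

lemma gci_mul_cutoff_nonneg (t : ℝ) : 0 ≤ t * gciCutoff t := by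
  rcases le_or_gt t 0 with h | h
  · simp [gciCutoff_nonpos h]
  · exact mul_nonneg h.le (gciCutoff_nonneg t)

lemma gci_base_pos {r : ℝ} (hr : r ∈ Ioo (-1 : ℝ) 1) : 0 < 1 - r ^ 2 := by
  nlinarith [hr.1, hr.2]

lemma gci_weight_continuousOn (s : ℝ) :
    ContinuousOn (fun r : ℝ => (1 - r ^ 2) ^ s) (Ioo (-1 : ℝ) 1) :=
  ContinuousOn.rpow_const (by fun_prop) fun _ hr => Or.inl (gci_base_pos hr).ne'

lemma gci_exp_le {κ r : ℝ} (hκ : 0 < κ) (hr : r ∈ Ioo (-1 : ℝ) 1) :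
    Real.exp (κ * r ^ 2 / 2) ≤ Real.exp (κ / 2) := by
  apply Real.exp_le_exp.2
  nlinarith [gci_base_pos hr]

/-- Integrability of the zeroth-order term of the weak equation. -/
lemma gci_integrableOn_zeroth {d : ℕ} (hd : 2 ≤ d) {κ : ℝ} (hκ : 0 < κ) {u v : ℝ → ℝ}
    (hu : ContinuousOn u (Ioo (-1 : ℝ) 1)) (hv : ContinuousOn v (Ioo (-1 : ℝ) 1))
    (hu2 : IntegrableOn (fun r => (1 - r ^ 2) ^ (((d : ℝ) - 1) / 2) * u r ^ 2) (Ioo (-1 : ℝ) 1))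
    (hv2 : IntegrableOn (fun r => (1 - r ^ 2) ^ (((d : ℝ) - 1) / 2) * v r ^ 2) (Ioo (-1 : ℝ) 1)) :
    IntegrableOn (fun r => (1 - r ^ 2) ^ (((d : ℝ) - 1) / 2) * (κ * r ^ 2 + ((d : ℝ) - 1)) *
            Real.exp (κ * r ^ 2 / 2) * u r * v r) (Ioo (-1 : ℝ) 1) := by
  have hd' : (2 : ℝ) ≤ d := by exact_mod_cast hd
  have := gci_integrableOn_mul (W := fun r => (1 - r ^ 2) ^ (((d : ℝ) - 1) / 2))
    (E := fun r => (κ * r ^ 2 + ((d : ℝ) - 1)) * Real.exp (κ * r ^ 2 / 2))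
    (C := (κ + ((d : ℝ) - 1)) * Real.exp (κ / 2))
    (gci_weight_continuousOn _) (by fun_prop)
    (fun r hr => Real.rpow_nonneg (gci_base_pos hr).le _)
    (fun r hr => by
      have h0 : 0 ≤ κ * r ^ 2 + ((d : ℝ) - 1) := by nlinarith [sq_nonneg r]
      rw [abs_of_nonneg (mul_nonneg h0 (Real.exp_pos _).le)]
      exact mul_le_mul (by nlinarith [gci_base_pos hr]) (gci_exp_le hκ hr) (Real.exp_pos _).le
        (by linarith))
    (hu.aestronglyMeasurable measurableSet_Ioo) (hv.aestronglyMeasurable measurableSet_Ioo)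
    hu2 hv2
  simpa only [mul_assoc] using this

/-- The even part of a GCI profile vanishes. -/
lemma gci_odd {d : ℕ} (hd : 2 ≤ d) {κ : ℝ} (hκ : 0 < κ) {h : ℝ → ℝ} (hh : IsGCIProfile d κ h) :
    ∀ r ∈ Ioo (-1 : ℝ) 1, h r + h (-r) = 0 := by
  obtain ⟨hdiff, hi0, hi1, heq⟩ := hh
  have hd' : (2 : ℝ) ≤ d := by exact_mod_cast hd
  have hneg : ∀ {r : ℝ}, r ∈ Ioo (-1 : ℝ) 1 → -r ∈ Ioo (-1 : ℝ) 1 := fun {r} hr =>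
    ⟨by linarith [hr.2], by linarith [hr.1]⟩
  have hrdiff : ∀ r ∈ Ioo (-1 : ℝ) 1, DifferentiableAt ℝ (fun x => h (-x)) r := fun r hr =>
    DifferentiableAt.comp r (hdiff _ (hneg hr)) differentiableAt_fun_id.neg
  set w : ℝ → ℝ := fun r => h r + h (-r) with hw
  have hwdiff : ∀ r ∈ Ioo (-1 : ℝ) 1, DifferentiableAt ℝ w r := fun r hr =>
    (hdiff r hr).add (hrdiff r hr)
  have hwd : ∀ r ∈ Ioo (-1 : ℝ) 1, deriv w r = deriv h r - deriv h (-r) := by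
    intro r hr
    rw [hw, deriv_fun_add (hdiff r hr) (hrdiff r hr), deriv_comp_neg]
    ring
  have hhc : ContinuousOn h (Ioo (-1 : ℝ) 1) := fun r hr =>
    (hdiff r hr).continuousAt.continuousWithinAt
  have hwc : ContinuousOn w (Ioo (-1 : ℝ) 1) := fun r hr =>
    (hwdiff r hr).continuousAt.continuousWithinAt
  have hr0 := gci_integrableOn_comp_neg hi0
  have hr1 := gci_integrableOn_comp_neg hi1
  simp only [neg_sq] at hr0 hr1
  have hw0 : IntegrableOn (fun r : ℝ => (1 - r ^ 2) ^ (((d : ℝ) - 1) / 2) * w r ^ 2)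
      (Ioo (-1 : ℝ) 1) := by
    refine Integrable.mono' ((hi0.add hr0).const_mul 2)
      (((gci_weight_continuousOn _).mul (hwc.pow 2)).aestronglyMeasurable measurableSet_Ioo) ?_
    refine (ae_restrict_iff' measurableSet_Ioo).2 (Filter.Eventually.of_forall fun r hr => ?_)
    have h1 : 0 ≤ (1 - r ^ 2) ^ (((d : ℝ) - 1) / 2) := Real.rpow_nonneg (gci_base_pos hr).le _
    rw [Real.norm_eq_abs, abs_of_nonneg (mul_nonneg h1 (sq_nonneg _))]
    simp only [Pi.add_apply, hw]
    nlinarith [mul_nonneg h1 (sq_nonneg (h r - h (-r)))]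
  have hw1 : IntegrableOn (fun r : ℝ => (1 - r ^ 2) ^ (((d : ℝ) + 1) / 2) * deriv w r ^ 2)
      (Ioo (-1 : ℝ) 1) := by
    refine Integrable.mono' ((hi1.add hr1).const_mul 2)
      (((gci_weight_continuousOn _).aestronglyMeasurable measurableSet_Ioo).mul
        ((measurable_deriv w).pow_const 2).aestronglyMeasurable) ?_
    refine (ae_restrict_iff' measurableSet_Ioo).2 (Filter.Eventually.of_forall fun r hr => ?_)
    have h1 : 0 ≤ (1 - r ^ 2) ^ (((d : ℝ) + 1) / 2) := Real.rpow_nonneg (gci_base_pos hr).le _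
    rw [Real.norm_eq_abs, abs_of_nonneg (mul_nonneg h1 (sq_nonneg _)), hwd r hr]
    simp only [Pi.add_apply]
    nlinarith [mul_nonneg h1 (sq_nonneg (deriv h r + deriv h (-r)))]
  have key := heq w hwdiff hw0 hw1
  -- The right-hand side is the integral of an odd function.
  have hrhs : ∫ r in Ioo (-1 : ℝ) 1,
      r * (1 - r ^ 2) ^ (((d : ℝ) - 1) / 2) * Real.exp (κ * r ^ 2 / 2) * w r = 0 := by
    have h1 := gci_integral_comp_neg (fun r : ℝ =>
      r * (1 - r ^ 2) ^ (((d : ℝ) - 1) / 2) * Real.exp (κ * r ^ 2 / 2) * w r)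
    have h2 : ∀ r : ℝ, w (-r) = w r := fun r => by simp [hw, add_comm]
    simp only [neg_sq, h2, neg_mul, integral_neg] at h1
    linarith
  have hB : IntegrableOn (fun r => (1 - r ^ 2) ^ (((d : ℝ) - 1) / 2) *
      (κ * r ^ 2 + ((d : ℝ) - 1)) * Real.exp (κ * r ^ 2 / 2) * h r * w r) (Ioo (-1 : ℝ) 1) :=
    gci_integrableOn_zeroth hd hκ hhc hwc hi0 hw0
  have hBw : IntegrableOn (fun r => (1 - r ^ 2) ^ (((d : ℝ) - 1) / 2) *
      (κ * r ^ 2 + ((d : ℝ) - 1)) * Real.exp (κ * r ^ 2 / 2) * w r * w r) (Ioo (-1 : ℝ) 1) :=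
    gci_integrableOn_zeroth hd hκ hwc hwc hw0 hw0
  have hA : IntegrableOn (fun r => (1 - r ^ 2) ^ (((d : ℝ) + 1) / 2) *
      Real.exp (κ * r ^ 2 / 2) * deriv h r * deriv w r) (Ioo (-1 : ℝ) 1) :=
    gci_integrableOn_mul (W := fun r => (1 - r ^ 2) ^ (((d : ℝ) + 1) / 2))
      (E := fun r => Real.exp (κ * r ^ 2 / 2)) (C := Real.exp (κ / 2))
      (gci_weight_continuousOn _) (by fun_prop)
      (fun r hr => Real.rpow_nonneg (gci_base_pos hr).le _)
      (fun r hr => by rw [abs_of_pos (Real.exp_pos _)]; exact gci_exp_le hκ hr)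
      (measurable_deriv h).aestronglyMeasurable (measurable_deriv w).aestronglyMeasurable hi1 hw1
  have hBval : 2 * ∫ r in Ioo (-1 : ℝ) 1, (1 - r ^ 2) ^ (((d : ℝ) - 1) / 2) *
      (κ * r ^ 2 + ((d : ℝ) - 1)) * Real.exp (κ * r ^ 2 / 2) * h r * w r =
      ∫ r in Ioo (-1 : ℝ) 1, (1 - r ^ 2) ^ (((d : ℝ) - 1) / 2) *
      (κ * r ^ 2 + ((d : ℝ) - 1)) * Real.exp (κ * r ^ 2 / 2) * w r * w r := by
    rw [two_mul]
    nth_rewrite 2 [← gci_integral_comp_neg]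
    rw [← integral_add hB (gci_integrableOn_comp_neg hB)]
    refine setIntegral_congr_fun measurableSet_Ioo fun r hr => ?_
    simp only [neg_sq, hw, neg_neg]
    ring
  have hAval : 0 ≤ 2 * ∫ r in Ioo (-1 : ℝ) 1, (1 - r ^ 2) ^ (((d : ℝ) + 1) / 2) *
      Real.exp (κ * r ^ 2 / 2) * deriv h r * deriv w r := by
    rw [two_mul]
    nth_rewrite 2 [← gci_integral_comp_neg]
    rw [← integral_add hA (gci_integrableOn_comp_neg hA)]
    refine setIntegral_nonneg measurableSet_Ioo fun r hr => ?_
    have h1 : 0 ≤ (1 - r ^ 2) ^ (((d : ℝ) + 1) / 2) * Real.exp (κ * r ^ 2 / 2) :=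
      mul_nonneg (Real.rpow_nonneg (gci_base_pos hr).le _) (Real.exp_pos _).le
    rw [hwd r hr, hwd _ (hneg hr)]
    simp only [neg_sq, neg_neg]
    have := mul_nonneg h1 (sq_nonneg (deriv h r - deriv h (-r)))
    linarith
  have hz := gci_eq_zero (p := fun r => (1 - r ^ 2) ^ (((d : ℝ) - 1) / 2) *
      (κ * r ^ 2 + ((d : ℝ) - 1)) * Real.exp (κ * r ^ 2 / 2) * w r * w r)
    (((((gci_weight_continuousOn _).mul (by fun_prop)).mul (by fun_prop)).mul hwc).mul hwc)
    (fun r hr => by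
      have h0 : 0 ≤ κ * r ^ 2 + ((d : ℝ) - 1) := by nlinarith [sq_nonneg r]
      rw [mul_assoc _ (w r) (w r)]
      exact mul_nonneg (mul_nonneg (mul_nonneg (Real.rpow_nonneg (gci_base_pos hr).le _) h0)
        (Real.exp_pos _).le) (mul_self_nonneg _)) hBw (by linarith)
  intro r hr
  have h1 := hz r hr
  have h0 : 0 < κ * r ^ 2 + ((d : ℝ) - 1) := by nlinarith [sq_nonneg r]
  have hp := Real.rpow_pos_of_pos (gci_base_pos hr) (((d : ℝ) - 1) / 2)
  simpa [h0.ne', hp.ne', (Real.exp_pos _).ne'] using h1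

/-- A GCI profile that vanishes at the origin is nonpositive on `[0,1)`. -/
lemma gci_nonpos {d : ℕ} (hd : 2 ≤ d) {κ : ℝ} (hκ : 0 < κ) {h : ℝ → ℝ}
    (hh : IsGCIProfile d κ h) (h00 : h 0 = 0) : ∀ r ∈ Ico (0 : ℝ) 1, h r ≤ 0 := by
  obtain ⟨hdiff, hi0, hi1, heq⟩ := hh
  have hd' : (2 : ℝ) ≤ d := by exact_mod_cast hd
  set l : ℝ → ℝ := fun r => if 0 ≤ r then gciCutoff (h r) else 0 with hl
  have hcomp : ∀ r ∈ Ioo (-1 : ℝ) 1,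
      HasDerivAt (fun x => gciCutoff (h x)) (min 1 (max (h r) 0) * deriv h r) r := fun r hr =>
    (gciCutoff_hasDerivAt (h r)).comp r (hdiff r hr).hasDerivAt
  have hl0 : l 0 = 0 := by simp [hl, h00, gciCutoff_nonpos]
  have hld : ∀ r ∈ Ioo (-1 : ℝ) 1,
      HasDerivAt l (if 0 ≤ r then min 1 (max (h r) 0) * deriv h r else 0) r := by
    intro r hr
    rcases lt_trichotomy r 0 with h0 | h0 | h0
    · rw [if_neg h0.not_ge]
      refine (hasDerivAt_const r (0 : ℝ)).congr_of_eventuallyEq ?_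
      filter_upwards [Iio_mem_nhds h0] with x hx
      exact if_neg (not_le.2 hx)
    -- At the origin the two one-sided derivatives are both `0`, since `φ' (h 0) = φ' 0 = 0`.
    · subst h0
      rw [if_pos le_rfl, ← hasDerivWithinAt_univ, ← Iic_union_Ici (a := (0 : ℝ))]
      have hc := hcomp 0 hr
      refine HasDerivWithinAt.union ?_ ?_
      · simp only [h00, max_self, min_eq_right zero_le_one, zero_mul]
        refine (hasDerivWithinAt_const (0 : ℝ) (Iic 0) (0 : ℝ)).congr (fun x hx => ?_) hl0
        rcases eq_or_lt_of_le (show x ≤ 0 from hx) with h1 | h1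
        · rw [h1, hl0]
        · exact if_neg h1.not_ge
      · exact hc.hasDerivWithinAt.congr (fun x hx => if_pos hx) (if_pos le_rfl)
    · rw [if_pos h0.le]
      refine (hcomp r hr).congr_of_eventuallyEq ?_
      filter_upwards [Ioi_mem_nhds h0] with x hx
      exact if_pos (le_of_lt hx)
  have hldiff : ∀ r ∈ Ioo (-1 : ℝ) 1, DifferentiableAt ℝ l r := fun r hr =>
    (hld r hr).differentiableAt
  have hhc : ContinuousOn h (Ioo (-1 : ℝ) 1) := fun r hr =>
    (hdiff r hr).continuousAt.continuousWithinAt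
  have hlc : ContinuousOn l (Ioo (-1 : ℝ) 1) := fun r hr =>
    (hldiff r hr).continuousAt.continuousWithinAt
  have hg0 : ∀ t : ℝ, 0 ≤ min 1 (max t 0) := fun t => le_min zero_le_one (le_max_right _ _)
  have hw0 : IntegrableOn (fun r : ℝ => (1 - r ^ 2) ^ (((d : ℝ) - 1) / 2) * l r ^ 2)
      (Ioo (-1 : ℝ) 1) := by
    refine Integrable.mono' hi0
      (((gci_weight_continuousOn _).mul (hlc.pow 2)).aestronglyMeasurable measurableSet_Ioo) ?_
    refine (ae_restrict_iff' measurableSet_Ioo).2 (Filter.Eventually.of_forall fun r hr => ?_)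
    have h1 : 0 ≤ (1 - r ^ 2) ^ (((d : ℝ) - 1) / 2) := Real.rpow_nonneg (gci_base_pos hr).le _
    rw [Real.norm_eq_abs, abs_of_nonneg (mul_nonneg h1 (sq_nonneg _))]
    refine mul_le_mul_of_nonneg_left ?_ h1
    simp only [hl]
    split_ifs
    · exact gciCutoff_sq_le _
    · simpa using sq_nonneg _
  have hw1 : IntegrableOn (fun r : ℝ => (1 - r ^ 2) ^ (((d : ℝ) + 1) / 2) * deriv l r ^ 2)
      (Ioo (-1 : ℝ) 1) := by
    refine Integrable.mono' hi1
      (((gci_weight_continuousOn _).aestronglyMeasurable measurableSet_Ioo).mul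
        ((measurable_deriv l).pow_const 2).aestronglyMeasurable) ?_
    refine (ae_restrict_iff' measurableSet_Ioo).2 (Filter.Eventually.of_forall fun r hr => ?_)
    have h1 : 0 ≤ (1 - r ^ 2) ^ (((d : ℝ) + 1) / 2) := Real.rpow_nonneg (gci_base_pos hr).le _
    rw [Real.norm_eq_abs, abs_of_nonneg (mul_nonneg h1 (sq_nonneg _)), (hld r hr).deriv]
    refine mul_le_mul_of_nonneg_left ?_ h1
    split_ifs
    · rw [mul_pow]
      exact mul_le_of_le_one_left (sq_nonneg _) (pow_le_one₀ (hg0 _) (min_le_left _ _))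
    · simpa using sq_nonneg _
  have key := heq l hldiff hw0 hw1
  have hA : 0 ≤ ∫ r in Ioo (-1 : ℝ) 1,
      (1 - r ^ 2) ^ (((d : ℝ) + 1) / 2) * Real.exp (κ * r ^ 2 / 2) * deriv h r * deriv l r := by
    refine setIntegral_nonneg measurableSet_Ioo fun r hr => ?_
    rw [mul_assoc _ (deriv h r), (hld r hr).deriv]
    refine mul_nonneg (mul_nonneg (Real.rpow_nonneg (gci_base_pos hr).le _)
      (Real.exp_pos _).le) ?_
    split_ifs
    · have := mul_nonneg (hg0 (h r)) (mul_self_nonneg (deriv h r))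
      linarith
    · simp
  have hR : 0 ≤ ∫ r in Ioo (-1 : ℝ) 1,
      r * (1 - r ^ 2) ^ (((d : ℝ) - 1) / 2) * Real.exp (κ * r ^ 2 / 2) * l r := by
    refine setIntegral_nonneg measurableSet_Ioo fun r hr => ?_
    simp only [hl]
    split_ifs with h0
    · exact mul_nonneg (mul_nonneg (mul_nonneg h0 (Real.rpow_nonneg (gci_base_pos hr).le _))
        (Real.exp_pos _).le) (gciCutoff_nonneg _)
    · simp
  have hz := gci_eq_zero (p := fun r => (1 - r ^ 2) ^ (((d : ℝ) - 1) / 2) *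
      (κ * r ^ 2 + ((d : ℝ) - 1)) * Real.exp (κ * r ^ 2 / 2) * h r * l r)
    (((((gci_weight_continuousOn _).mul (by fun_prop)).mul (by fun_prop)).mul hhc).mul hlc)
    (fun r hr => by
      have h0 : 0 ≤ κ * r ^ 2 + ((d : ℝ) - 1) := by nlinarith [sq_nonneg r]
      rw [mul_assoc _ (h r) (l r)]
      refine mul_nonneg (mul_nonneg (mul_nonneg (Real.rpow_nonneg (gci_base_pos hr).le _) h0)
        (Real.exp_pos _).le) ?_
      simp only [hl]
      split_ifs
      · exact gci_mul_cutoff_nonneg _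
      · simp)
    (gci_integrableOn_zeroth hd hκ hhc hlc hi0 hw0) (by linarith)
  intro r hr
  have hr' : r ∈ Ioo (-1 : ℝ) 1 := ⟨by linarith [hr.1], hr.2⟩
  by_contra! hpos
  have h1 := hz r hr'
  have h0 : 0 < κ * r ^ 2 + ((d : ℝ) - 1) := by nlinarith [sq_nonneg r]
  have hp := Real.rpow_pos_of_pos (gci_base_pos hr') (((d : ℝ) - 1) / 2)
  have hlr : l r = gciCutoff (h r) := if_pos hr.1
  have hq := gciCutoff_pos hpos
  rw [← hlr] at hq
  have : 0 < (1 - r ^ 2) ^ (((d : ℝ) - 1) / 2) *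
      (κ * r ^ 2 + ((d : ℝ) - 1)) * Real.exp (κ * r ^ 2 / 2) * h r * l r := by positivity
  exact this.ne' h1

/-- the GCI profile `h` is odd on `(−1,1)` and nonpositive on `[0,1)`. -/
theorem stmt10 (d : ℕ) (hd : 2 ≤ d) (κ : ℝ) (hκ : 0 < κ)
    (h : ℝ → ℝ) (hh : IsGCIProfile d κ h) :
    (∀ r ∈ Ioo (-1 : ℝ) 1, h (-r) = - h r) ∧ (∀ r ∈ Ico (0 : ℝ) 1, h r ≤ 0) := by
  have hodd := gci_odd hd hκ hh
  refine ⟨fun r hr => by linarith [hodd r hr], gci_nonpos hd hκ hh ?_⟩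
  have := hodd 0 (by norm_num)
  rw [neg_zero] at this
  linarith
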